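/- arXiv:2206.09838 — 2 statements merged into one kernel-verified Lean document; each statement's English description precedes it below -/
import Mathlib

section
/- Let 𝒜 be a Riesz algebra with identity e possessing a set {p_i : i ∈ I} of pairwise orthogonal o-minimal idempotents such that sup{∑_{i∈F} p_i : F ⊆ I finite} = e and dim(p_i 𝒜 p_j) ≤ 1 for all i, j ∈ I. Let 𝔛 be an order complete Riesz 𝒜-module such that for every x ∈ 𝔛₊ one has sup{(∑_{i∈F} p_i)·x·(∑_{i∈G} p_i) : F, G ⊆ I finite} = e·x·e, and let D : 𝒜 → 𝔛 be a derivation. Then D is regular if and only if the family {∑_{i∈F} |D(p_i)| : F ⊆ I finite} is bounded above in 𝔛. -/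
/- STATEMENT 0 (Theorem LA): characterization of regularity of a derivation from a
   unital Riesz algebra with a full system of pairwise orthogonal o-minimal
   idempotents into an order complete Riesz module. -/

/-- A linear map between (pre-)ordered real modules is regular if it is a finite
linear combination of positive linear maps. -/
def IsRegularLinearMap {A B : Type*} [AddCommGroup A] [PartialOrder A] [Module ℝ A]
    [AddCommGroup B] [PartialOrder B] [Module ℝ B] (T : A →ₗ[ℝ] B) : Prop :=
  ∃ (n : ℕ) (c : Fin n → ℝ) (P : Fin n → (A →ₗ[ℝ] B)),
    (∀ i, ∀ a : A, 0 ≤ a → 0 ≤ P i a) ∧ T = ∑ i, c i • P i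

theorem aux_riesz_kantorovich {A X : Type*} [AddCommGroup A] [Lattice A] [IsOrderedAddMonoid A]
    [Module ℝ A] [AddCommGroup X] [Lattice X] [IsOrderedAddMonoid X] [Module ℝ X]
    (hA : ∀ (r : ℝ) (a : A), 0 ≤ r → 0 ≤ a → 0 ≤ r • a)
    (hX : ∀ (r : ℝ) (a : X), 0 ≤ r → 0 ≤ a → 0 ≤ r • a)
    (hoc : ∀ S : Set X, S.Nonempty → BddAbove S → ∃ b, IsLUB S b)
    (T : A →ₗ[ℝ] X)
    (hb : ∀ a : A, 0 ≤ a → ∃ z, ∀ b, 0 ≤ b → b ≤ a → T b ≤ z) :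
    ∃ S : A →ₗ[ℝ] X, ∀ a, 0 ≤ a → 0 ≤ S a ∧ T a ≤ S a := by
  have h1 : ∀ a : A, ∃ s : X, 0 ≤ a → IsLUB {y | ∃ b, 0 ≤ b ∧ b ≤ a ∧ y = T b} s := by
    intro a
    by_cases ha : 0 ≤ a
    · obtain ⟨z, hz⟩ := hb a ha
      obtain ⟨s, hs⟩ := hoc {y | ∃ b, 0 ≤ b ∧ b ≤ a ∧ y = T b} ⟨T 0, 0, le_refl _, ha, rfl⟩
        ⟨z, by rintro y ⟨b, h0, h1, rfl⟩; exact hz b h0 h1⟩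
      exact ⟨s, fun _ => hs⟩
    · exact ⟨0, fun h => absurd h ha⟩
  choose f hf using h1
  have hle : ∀ a b, 0 ≤ b → b ≤ a → T b ≤ f a := fun a b h0 h1 =>
    (hf a (h0.trans h1)).1 ⟨b, h0, h1, rfl⟩
  have hlub : ∀ a z, 0 ≤ a → (∀ b, 0 ≤ b → b ≤ a → T b ≤ z) → f a ≤ z := by
    intro a z ha h
    apply (hf a ha).2
    rintro y ⟨b, h0, h1, rfl⟩
    exact h b h0 h1
  have hadd : ∀ x y, 0 ≤ x → 0 ≤ y → f (x + y) = f x + f y := by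
    intro x y hx hy
    apply le_antisymm
    · apply hlub _ _ (add_nonneg hx hy)
      intro b h0 h1
      have e : T b = T (b ⊓ x) + T (b - b ⊓ x) := by rw [← map_add]; congr 1; abel
      rw [e]
      apply add_le_add
      · exact hle _ _ (le_inf h0 hx) inf_le_right
      · apply hle
        · exact sub_nonneg.2 inf_le_left
        · rw [sub_le_iff_le_add, add_comm, inf_add]
          exact le_inf (le_add_of_nonneg_right hy) h1
    · rw [← le_sub_iff_add_le]
      apply hlub _ _ hx
      intro b h0 h1
      rw [le_sub_iff_add_le, add_comm, ← le_sub_iff_add_le]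
      apply hlub _ _ hy
      intro c h2 h3
      rw [le_sub_iff_add_le, ← map_add]
      apply hle _ _ (add_nonneg h2 h0)
      rw [add_comm x y]
      exact add_le_add h3 h1
  have hsle : ∀ (r : ℝ) x, 0 < r → 0 ≤ x → f (r • x) ≤ r • f x := by
    intro r x hr hx
    apply hlub _ _ (hA r x hr.le hx)
    intro b h0 h1
    have h2 : T (r⁻¹ • b) ≤ f x := by
      apply hle _ _ (hA _ _ (inv_nonneg.2 hr.le) h0)
      have := hA r⁻¹ (r • x - b) (inv_nonneg.2 hr.le) (sub_nonneg.2 h1)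
      rw [smul_sub, smul_smul, inv_mul_cancel₀ hr.ne', one_smul] at this
      exact sub_nonneg.1 this
    have := hX r (f x - T (r⁻¹ • b)) hr.le (sub_nonneg.2 h2)
    rw [smul_sub, map_smul, smul_smul, mul_inv_cancel₀ hr.ne', one_smul] at this
    exact sub_nonneg.1 this
  have hsm : ∀ (r : ℝ) x, 0 < r → 0 ≤ x → f (r • x) = r • f x := by
    intro r x hr hx
    apply le_antisymm (hsle r x hr hx)
    have h := hsle r⁻¹ (r • x) (inv_pos.2 hr) (hA _ _ hr.le hx)
    rw [smul_smul, inv_mul_cancel₀ hr.ne', one_smul] at h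
    have := hX r _ hr.le (sub_nonneg.2 h)
    rw [smul_sub, smul_smul, mul_inv_cancel₀ hr.ne', one_smul] at this
    exact sub_nonneg.1 this
  have hF : ∀ x y, 0 ≤ x → 0 ≤ y → f ((x - y)⁺) - f ((x - y)⁻) = f x - f y := by
    intro x y hx hy
    rw [sub_eq_sub_iff_add_eq_add, ← hadd _ _ (posPart_nonneg _) hy,
      ← hadd _ _ hx (negPart_nonneg _)]
    congr 1
    rw [← sub_eq_sub_iff_add_eq_add]
    exact posPart_sub_negPart _
  have h00 : f 0 = 0 := by
    have := hadd 0 0 le_rfl le_rfl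
    rw [add_zero] at this
    exact left_eq_add.1 this
  refine ⟨{ toFun := fun a => f a⁺ - f a⁻, map_add' := ?_, map_smul' := ?_ }, ?_⟩
  · intro a b
    have e : a + b = (a⁺ + b⁺) - (a⁻ + b⁻) := by
      conv_lhs => rw [← posPart_sub_negPart a, ← posPart_sub_negPart b]
      abel
    rw [e, hF _ _ (add_nonneg (posPart_nonneg _) (posPart_nonneg _))
      (add_nonneg (negPart_nonneg _) (negPart_nonneg _)),
      hadd _ _ (posPart_nonneg _) (posPart_nonneg _), hadd _ _ (negPart_nonneg _) (negPart_nonneg _)]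
    abel
  · intro r a
    simp only [RingHom.id_apply]
    rcases lt_trichotomy r 0 with hr | hr | hr
    · have e : r • a = (-r) • a⁻ - (-r) • a⁺ := by
        conv_lhs => rw [← posPart_sub_negPart a]
        rw [smul_sub, neg_smul, neg_smul]; abel
      have hr' : 0 < -r := neg_pos.2 hr
      rw [e, hF _ _ (hA _ _ hr'.le (negPart_nonneg _)) (hA _ _ hr'.le (posPart_nonneg _)),
        hsm _ _ hr' (negPart_nonneg _), hsm _ _ hr' (posPart_nonneg _),
        smul_sub, neg_smul, neg_smul]
      abel
    · subst hr
      simp [h00]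
    · have e : r • a = r • a⁺ - r • a⁻ := by
        conv_lhs => rw [← posPart_sub_negPart a]
        rw [smul_sub]
      rw [e, hF _ _ (hA _ _ hr.le (posPart_nonneg _)) (hA _ _ hr.le (negPart_nonneg _)),
        hsm _ _ hr (negPart_nonneg _), hsm _ _ hr (posPart_nonneg _), smul_sub]
  · intro a ha
    have e : f a⁺ - f a⁻ = f a := by
      have := hF a 0 ha le_rfl
      rwa [sub_zero, h00, sub_zero] at this
    show 0 ≤ f a⁺ - f a⁻ ∧ T a ≤ f a⁺ - f a⁻
    rw [e]
    refine ⟨?_, hle a a ha le_rfl⟩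
    have := hle a 0 le_rfl ha
    rwa [map_zero] at this

theorem aux_regular_of_sub {A B : Type*} [AddCommGroup A] [PartialOrder A] [Module ℝ A]
    [AddCommGroup B] [PartialOrder B] [Module ℝ B] (T P Q : A →ₗ[ℝ] B)
    (hP : ∀ a, 0 ≤ a → 0 ≤ P a) (hQ : ∀ a, 0 ≤ a → 0 ≤ Q a) (h : T = P - Q) :
    IsRegularLinearMap T := by
  refine ⟨2, ![1, -1], ![P, Q], ?_, ?_⟩
  · intro i
    fin_cases i
    · exact hP
    · exact hQ
  · rw [h]
    simp [Fin.sum_univ_two, sub_eq_add_neg]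

theorem derivation_regular_iff_bddAbove
    {𝒜 𝔛 : Type*} {I : Type*}
    [Ring 𝒜] [Lattice 𝒜] [Module ℝ 𝒜]
    [AddCommGroup 𝔛] [Lattice 𝔛] [Module ℝ 𝔛]
    -- 𝒜 is a (real) Riesz algebra (with identity e = 1):
    (h𝒜add : ∀ a b c : 𝒜, a ≤ b → a + c ≤ b + c)
    (h𝒜smul : ∀ (r : ℝ) (a : 𝒜), 0 ≤ r → 0 ≤ a → 0 ≤ r • a)
    (h𝒜mul : ∀ a b : 𝒜, 0 ≤ a → 0 ≤ b → 0 ≤ a * b)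
    -- 𝔛 is a Riesz space:
    (h𝔛add : ∀ x y z : 𝔛, x ≤ y → x + z ≤ y + z)
    (h𝔛smul : ∀ (r : ℝ) (x : 𝔛), 0 ≤ r → 0 ≤ x → 0 ≤ r • x)
    -- 𝔛 is order complete:
    (h𝔛oc : ∀ S : Set 𝔛, S.Nonempty → BddAbove S → ∃ b, IsLUB S b)
    -- 𝔛 is a Riesz 𝒜-module with module products L (left) and R (right):
    (L : 𝒜 →ₗ[ℝ] 𝔛 →ₗ[ℝ] 𝔛) (R : 𝒜 →ₗ[ℝ] 𝔛 →ₗ[ℝ] 𝔛)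
    (hLmul : ∀ (a b : 𝒜) (x : 𝔛), L (a * b) x = L a (L b x))
    (hRmul : ∀ (a b : 𝒜) (x : 𝔛), R (a * b) x = R b (R a x))
    (hLR : ∀ (a b : 𝒜) (x : 𝔛), L a (R b x) = R b (L a x))
    (hLpos : ∀ (a : 𝒜) (x : 𝔛), 0 ≤ a → 0 ≤ x → 0 ≤ L a x)
    (hRpos : ∀ (a : 𝒜) (x : 𝔛), 0 ≤ a → 0 ≤ x → 0 ≤ R a x)
    -- {p i : i ∈ I} is a set of pairwise orthogonal o-minimal idempotents:
    (p : I → 𝒜)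
    (hppos : ∀ i, 0 ≤ p i)
    (hpidem : ∀ i, p i * p i = p i)
    (hportho : ∀ i j, i ≠ j → p i * p j = 0)
    (hominimal : ∀ i, ∀ a : 𝒜, ∃ c : ℝ, p i * a * p i = c • p i)
    -- sup of the finite partial sums of the p i is the identity:
    (hsupone : IsLUB {s : 𝒜 | ∃ F : Finset I, s = ∑ i ∈ F, p i} 1)
    -- dim (p i) 𝒜 (p j) ≤ 1:
    (hdim : ∀ i j : I, ∃ u : 𝒜, ∀ a : 𝒜, ∃ c : ℝ, p i * a * p j = c • u)
    -- for every x ∈ 𝔛₊, sup over finite F, G of (∑_{i∈F} p i)·x·(∑_{i∈G} p i) is e·x·e: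
    (hsupx : ∀ x : 𝔛, 0 ≤ x →
      IsLUB {y : 𝔛 | ∃ F G : Finset I, y = L (∑ i ∈ F, p i) (R (∑ i ∈ G, p i) x)}
        (L 1 (R 1 x)))
    -- D is a derivation:
    (D : 𝒜 →ₗ[ℝ] 𝔛)
    (hD : ∀ a b : 𝒜, D (a * b) = L a (D b) + R b (D a)) :
    IsRegularLinearMap D ↔
      BddAbove {y : 𝔛 | ∃ F : Finset I, y = ∑ i ∈ F, |D (p i)|} := by
  classical
  have : IsOrderedAddMonoid 𝒜 := { add_le_add_left := fun a b h c => h𝒜add a b c h }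
  have : IsOrderedAddMonoid 𝔛 := { add_le_add_left := fun a b h c => h𝔛add a b c h }
  constructor
  · rintro ⟨n, c, P, hP, rfl⟩
    refine ⟨∑ k, |c k| • P k 1, ?_⟩
    rintro y ⟨F, rfl⟩
    have h1 : ∀ i, |(∑ k, c k • P k) (p i)| ≤ ∑ k, |c k| • P k (p i) := by
      intro i
      have key : ∀ k, c k • P k (p i) ≤ |c k| • P k (p i) ∧
          -(c k • P k (p i)) ≤ |c k| • P k (p i) := by
        intro k
        constructor
        · have := h𝔛smul (|c k| - c k) _ (sub_nonneg.2 (le_abs_self _)) (hP k _ (hppos i))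
          rw [sub_smul] at this
          exact sub_nonneg.1 this
        · have := h𝔛smul (|c k| - -c k) _ (sub_nonneg.2 (neg_le_abs _)) (hP k _ (hppos i))
          rw [sub_smul, neg_smul] at this
          exact sub_nonneg.1 this
      rw [LinearMap.sum_apply]
      simp only [LinearMap.smul_apply]
      apply abs_le'.2
      constructor
      · exact Finset.sum_le_sum fun k _ => (key k).1
      · rw [← Finset.sum_neg_distrib]
        exact Finset.sum_le_sum fun k _ => (key k).2
    refine (Finset.sum_le_sum fun i _ => h1 i).trans ?_
    rw [Finset.sum_comm]
    apply Finset.sum_le_sum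
    intro k _
    rw [← Finset.smul_sum, ← map_sum]
    have h2 : 0 ≤ 1 - ∑ i ∈ F, p i := sub_nonneg.2 (hsupone.1 ⟨F, rfl⟩)
    have := h𝔛smul |c k| _ (abs_nonneg _) (hP k _ h2)
    rw [map_sub, smul_sub] at this
    exact sub_nonneg.1 this
  · rintro ⟨M, hM⟩
    have hM0 : 0 ≤ M := hM ⟨∅, by simp⟩
    have hMi : ∀ i, |D (p i)| ≤ M := fun i => hM ⟨{i}, by simp⟩
    have h01 : (0 : 𝒜) ≤ 1 := hsupone.1 ⟨∅, by simp⟩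
    have hLmono : ∀ a x y, 0 ≤ a → x ≤ y → L a x ≤ L a y := by
      intro a x y ha h
      have := hLpos a _ ha (sub_nonneg.2 h)
      rw [map_sub] at this
      exact sub_nonneg.1 this
    have hRmono : ∀ a x y, 0 ≤ a → x ≤ y → R a x ≤ R a y := by
      intro a x y ha h
      have := hRpos a _ ha (sub_nonneg.2 h)
      rw [map_sub] at this
      exact sub_nonneg.1 this
    have hLmono2 : ∀ a b x, a ≤ b → 0 ≤ x → L a x ≤ L b x := by
      intro a b x h hx
      have := hLpos _ x (sub_nonneg.2 h) hx
      rw [map_sub, LinearMap.sub_apply] at this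
      exact sub_nonneg.1 this
    have hRmono2 : ∀ a b x, a ≤ b → 0 ≤ x → R a x ≤ R b x := by
      intro a b x h hx
      have := hRpos _ x (sub_nonneg.2 h) hx
      rw [map_sub, LinearMap.sub_apply] at this
      exact sub_nonneg.1 this
    -- positivity can be tested on the corners
    have hcorner : ∀ w : 𝔛, (∀ i j, 0 ≤ L (p i) (R (p j) w)) → 0 ≤ L 1 (R 1 w) := by
      intro w hw
      have hFG : ∀ F G : Finset I, 0 ≤ L (∑ i ∈ F, p i) (R (∑ i ∈ G, p i) w) := by
        intro F G
        simp only [map_sum, LinearMap.sum_apply]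
        exact Finset.sum_nonneg fun j _ => Finset.sum_nonneg fun i _ => hw _ _
      have hsplit : ∀ a b, L a (R b w) = L a (R b w⁺) - L a (R b w⁻) := by
        intro a b
        rw [← map_sub, ← map_sub, posPart_sub_negPart]
      rw [hsplit]
      apply sub_nonneg.2
      apply (hsupx w⁻ (negPart_nonneg _)).2
      rintro y ⟨F, G, rfl⟩
      have h := hFG F G
      rw [hsplit] at h
      exact (sub_nonneg.1 h).trans ((hsupx w⁺ (posPart_nonneg _)).1 ⟨F, G, rfl⟩)
    have key : ∀ i j b, L (p i) (R (p j) (D (p i * b * p j))) =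
        L (p i) (R (p j) (D b + L b (D (p j)) + R b (D (p i)))) := by
      intro i j b
      have hL2 : ∀ x, L (p i) (L (p i) x) = L (p i) x := fun x => by rw [← hLmul, hpidem]
      have hR2 : ∀ x, R (p j) (R (p j) x) = R (p j) x := fun x => by rw [← hRmul, hpidem]
      rw [hD, hD, hLmul]
      simp only [map_add, hR2, ← hLR, hL2]
      abel
    have hbd : ∀ a : 𝒜, 0 ≤ a → ∃ z, ∀ b, 0 ≤ b → b ≤ a → L 1 (R 1 (D b)) ≤ z := by
      intro a ha
      set K := |D a| + L a M + R a M with hK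
      have hK0 : 0 ≤ K := add_nonneg (add_nonneg (abs_nonneg _) (hLpos _ _ ha hM0))
        (hRpos _ _ ha hM0)
      refine ⟨L 1 (R 1 (K + (L a M + R a M))), ?_⟩
      intro b hb hba
      apply sub_nonneg.1
      rw [← map_sub, ← map_sub]
      apply hcorner
      intro i j
      have hΦ : ∀ x y, x ≤ y → L (p i) (R (p j) x) ≤ L (p i) (R (p j) y) := fun x y h =>
        hLmono _ _ _ (hppos i) (hRmono _ _ _ (hppos j) h)
      -- the corner of b is a fraction of the corner of a
      have hr : ∃ r : ℝ, 0 ≤ r ∧ r ≤ 1 ∧ p i * b * p j = r • (p i * a * p j) := by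
        have hpos : ∀ c, 0 ≤ c → 0 ≤ p i * c * p j := fun c hc =>
          h𝒜mul _ _ (h𝒜mul _ _ (hppos i) hc) (hppos j)
        have hA := hpos a ha
        have hB := hpos b hb
        have hAB := hpos _ (sub_nonneg.2 hba)
        rw [mul_sub, sub_mul] at hAB
        by_cases hA0 : p i * a * p j = 0
        · refine ⟨0, le_rfl, zero_le_one, ?_⟩
          rw [hA0] at hAB
          rw [zero_smul]
          exact le_antisymm (sub_nonneg.1 hAB) hB
        · obtain ⟨u, hu⟩ := hdim i j
          obtain ⟨s, hs⟩ := hu a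
          obtain ⟨t, ht⟩ := hu b
          have hs0 : s ≠ 0 := by
            rintro rfl
            exact hA0 (by rw [hs, zero_smul])
          have hneg : ∀ q : ℝ, 0 ≤ q • (p i * a * p j) → 0 ≤ q := by
            intro q hq
            by_contra hlt
            have hlt : 0 < -q := by linarith
            have h1 := h𝒜smul (-q)⁻¹ _ (inv_nonneg.2 hlt.le) hq
            rw [smul_smul, inv_neg, neg_mul, inv_mul_cancel₀ (by linarith), neg_smul,
              one_smul] at h1
            exact hA0 (le_antisymm (neg_nonneg.1 h1) hA)
          have e : p i * b * p j = (t / s) • (p i * a * p j) := by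
            rw [ht, hs, smul_smul, div_mul_cancel₀ _ hs0]
          refine ⟨t / s, ?_, ?_, e⟩
          · apply hneg
            rw [← e]; exact hB
          · have := hneg (1 - t / s) (by rw [sub_smul, one_smul, ← e]; exact hAB)
            linarith
      obtain ⟨r, hr0, hr1, hr⟩ := hr
      have k1 := key i j b
      have k2 := key i j a
      rw [hr, map_smul, map_smul, map_smul, k2] at k1
      have e1 : L (p i) (R (p j) (D a + L a (D (p j)) + R a (D (p i)))) ≤ L (p i) (R (p j) K) :=
        hΦ _ _ (add_le_add (add_le_add (le_abs_self _)
          (hLmono _ _ _ ha ((le_abs_self _).trans (hMi j))))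
          (hRmono _ _ _ ha ((le_abs_self _).trans (hMi i))))
      have e2 : r • L (p i) (R (p j) (D a + L a (D (p j)) + R a (D (p i)))) ≤
          L (p i) (R (p j) K) := by
        have h1 := h𝔛smul r _ hr0 (sub_nonneg.2 e1)
        have h2 := h𝔛smul (1 - r) _ (sub_nonneg.2 hr1)
          (hLpos _ _ (hppos i) (hRpos _ _ (hppos j) hK0))
        rw [smul_sub] at h1
        rw [sub_smul, one_smul] at h2
        exact (sub_nonneg.1 h1).trans (sub_nonneg.1 h2)
      have e3 : -(L b (D (p j)) + R b (D (p i))) ≤ L a M + R a M := by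
        rw [neg_add, ← map_neg (L b), ← map_neg (R b)]
        apply add_le_add
        · exact (hLmono _ _ _ hb ((neg_le_abs _).trans (hMi j))).trans (hLmono2 _ _ _ hba hM0)
        · exact (hRmono _ _ _ hb ((neg_le_abs _).trans (hMi i))).trans (hRmono2 _ _ _ hba hM0)
      have e4 := hΦ _ _ e3
      have e5 : L (p i) (R (p j) (D b)) =
          r • L (p i) (R (p j) (D a + L a (D (p j)) + R a (D (p i)))) +
          L (p i) (R (p j) (-(L b (D (p j)) + R b (D (p i))))) := by
        rw [k1, ← map_add, ← map_add]
        congr 2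
        abel
      rw [map_sub, map_sub, e5]
      apply sub_nonneg.2
      rw [map_add (R (p j)) K, map_add (L (p i)) (R (p j) K)]
      exact add_le_add e2 e4
    obtain ⟨S, hS⟩ := aux_riesz_kantorovich h𝒜smul h𝔛smul h𝔛oc
      ((L 1).comp ((R 1).comp D)) (by simpa using hbd)
    refine aux_regular_of_sub D (S + L.flip (D 1)⁺ + R.flip (D 1)⁺)
      ((S - (L 1).comp ((R 1).comp D)) + L.flip (D 1)⁻ + R.flip (D 1)⁻) ?_ ?_ ?_
    · intro a ha
      exact add_nonneg (add_nonneg (hS a ha).1 (hLpos _ _ ha (posPart_nonneg _)))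
        (hRpos _ _ ha (posPart_nonneg _))
    · intro a ha
      exact add_nonneg (add_nonneg (sub_nonneg.2 (hS a ha).2) (hLpos _ _ ha (negPart_nonneg _)))
        (hRpos _ _ ha (negPart_nonneg _))
    · ext a
      have d1 : D a = L a (D 1) + R 1 (D a) := by
        conv_lhs => rw [← mul_one a, hD]
      have d2 : D a = L 1 (D a) + R a (D 1) := by
        conv_lhs => rw [← one_mul a, hD]
      have d3 : R 1 (D a) = L 1 (R 1 (D a)) + R a (D 1) := by
        conv_lhs => rw [d2]
        rw [map_add, hLR, ← hRmul, mul_one]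
      have l1 : L a (D 1) = L a (D 1)⁺ - L a (D 1)⁻ := by
        rw [← map_sub, posPart_sub_negPart]
      have r1 : R a (D 1) = R a (D 1)⁺ - R a (D 1)⁻ := by
        rw [← map_sub, posPart_sub_negPart]
      rw [d3, l1, r1] at d1
      simp only [LinearMap.sub_apply, LinearMap.add_apply, LinearMap.flip_apply,
        LinearMap.comp_apply]
      refine d1.trans ?_
      abel
end

section
/- Let 𝒜 be a Riesz algebra, let p and q be positive idempotents of 𝒜 with dim(p𝒜q) ≤ 1, let 𝔛 be a Riesz 𝒜-module and let D : 𝒜 → 𝔛 be a derivation. Then for every a ∈ 𝒜₊ and every t ∈ 𝒜 with |t| ≤ a, one has |p·D(ptq)·q| ≤ |p·D(paq)·q|. -/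
/- STATEMENT 15: If p, q are positive idempotents of a Riesz algebra 𝒜 with
   dim(p𝒜q) ≤ 1, 𝔛 is a Riesz 𝒜-module and D : 𝒜 → 𝔛 is a derivation, then for
   every a ∈ 𝒜₊ and every t with |t| ≤ a one has |p·D(ptq)·q| ≤ |p·D(paq)·q|. -/

theorem abs_pDq_monotone
    {𝒜 𝔛 : Type*}
    [Ring 𝒜] [Lattice 𝒜] [Module ℝ 𝒜]
    [AddCommGroup 𝔛] [Lattice 𝔛] [Module ℝ 𝔛]
    -- 𝒜 is a (real) Riesz algebra:
    (h𝒜add : ∀ a b c : 𝒜, a ≤ b → a + c ≤ b + c)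
    (h𝒜smul : ∀ (r : ℝ) (a : 𝒜), 0 ≤ r → 0 ≤ a → 0 ≤ r • a)
    (h𝒜mul : ∀ a b : 𝒜, 0 ≤ a → 0 ≤ b → 0 ≤ a * b)
    -- 𝔛 is a Riesz space:
    (h𝔛add : ∀ x y z : 𝔛, x ≤ y → x + z ≤ y + z)
    (h𝔛smul : ∀ (r : ℝ) (x : 𝔛), 0 ≤ r → 0 ≤ x → 0 ≤ r • x)
    -- 𝔛 is a Riesz 𝒜-module with module products L (left) and R (right):
    (L : 𝒜 →ₗ[ℝ] 𝔛 →ₗ[ℝ] 𝔛) (R : 𝒜 →ₗ[ℝ] 𝔛 →ₗ[ℝ] 𝔛)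
    (hLmul : ∀ (a b : 𝒜) (x : 𝔛), L (a * b) x = L a (L b x))
    (hRmul : ∀ (a b : 𝒜) (x : 𝔛), R (a * b) x = R b (R a x))
    (hLR : ∀ (a b : 𝒜) (x : 𝔛), L a (R b x) = R b (L a x))
    (hLpos : ∀ (a : 𝒜) (x : 𝔛), 0 ≤ a → 0 ≤ x → 0 ≤ L a x)
    (hRpos : ∀ (a : 𝒜) (x : 𝔛), 0 ≤ a → 0 ≤ x → 0 ≤ R a x)
    -- p and q are positive idempotents with dim(p𝒜q) ≤ 1:
    (p q : 𝒜) (hp : 0 ≤ p) (hq : 0 ≤ q) (hpidem : p * p = p) (hqidem : q * q = q)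
    (hdim : ∃ u : 𝒜, ∀ a : 𝒜, ∃ c : ℝ, p * a * q = c • u)
    -- D is a derivation:
    (D : 𝒜 →ₗ[ℝ] 𝔛)
    (hD : ∀ a b : 𝒜, D (a * b) = L a (D b) + R b (D a)) :
    ∀ a : 𝒜, 0 ≤ a → ∀ t : 𝒜, |t| ≤ a →
      |L p (R q (D (p * t * q)))| ≤ |L p (R q (D (p * a * q)))| := by
  haveI : IsOrderedAddMonoid 𝒜 :=
    { add_le_add_left := fun a b h c => h𝒜add a b c h }
  haveI : IsOrderedAddMonoid 𝔛 :=
    { add_le_add_left := fun a b h c => h𝔛add a b c h }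
  intro a ha t hta
  have h1 : t ≤ a := (le_abs_self t).trans hta
  have h2 : -t ≤ a := (neg_le_abs t).trans hta
  have k1 : p * t * q ≤ p * a * q := by
    have := h𝒜mul _ _ (h𝒜mul p (a - t) hp (sub_nonneg.2 h1)) hq
    rw [mul_sub, sub_mul] at this
    exact sub_nonneg.1 this
  have k2 : -(p * t * q) ≤ p * a * q := by
    have := h𝒜mul _ _ (h𝒜mul p (a - -t) hp (sub_nonneg.2 h2)) hq
    rw [mul_sub, sub_mul, mul_neg, neg_mul] at this
    exact sub_nonneg.1 this
  have k0 : 0 ≤ p * a * q := h𝒜mul _ _ (h𝒜mul p a hp ha) hq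
  obtain ⟨u, hu⟩ := hdim
  obtain ⟨c, hc⟩ := hu t
  obtain ⟨d, hd⟩ := hu a
  have key : ∃ l : ℝ, -1 ≤ l ∧ l ≤ 1 ∧ p * t * q = l • (p * a * q) := by
    by_cases hv : p * a * q = 0
    · refine ⟨0, by norm_num, by norm_num, ?_⟩
      rw [zero_smul]
      rw [hv] at k1 k2
      exact le_antisymm k1 (neg_nonpos.1 k2)
    · have hd0 : d ≠ 0 := by
        rintro rfl
        exact hv (by rw [hd, zero_smul])
      have e : p * t * q = (c / d) • (p * a * q) := by
        rw [hc, hd, smul_smul, div_mul_cancel₀ _ hd0]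
      generalize c / d = l at e
      rw [e] at k1 k2
      generalize p * a * q = v at *
      refine ⟨l, ?_, ?_, e⟩
      · by_contra! hl
        have g := h𝒜smul (-1 - l) v (by linarith) k0
        have g2 : (-1 - l) • v ≤ 0 := by
          have : (-1 - l) • v = -(l • v) - v := by module
          rw [this]
          exact sub_nonpos.2 k2
        rcases smul_eq_zero.1 (le_antisymm g2 g) with h | h
        · linarith
        · exact hv h
      · by_contra! hl
        have g := h𝒜smul (l - 1) v (by linarith) k0
        have g2 : (l - 1) • v ≤ 0 := by
          have : (l - 1) • v = l • v - v := by module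
          rw [this]
          exact sub_nonpos.2 k1
        rcases smul_eq_zero.1 (le_antisymm g2 g) with h | h
        · linarith
        · exact hv h
  obtain ⟨l, hl1, hl2, e⟩ := key
  rw [e]
  simp only [map_smul]
  generalize L p (R q (D (p * a * q))) = x
  have main : ∀ m : ℝ, -1 ≤ m → m ≤ 1 → m • x ≤ |x| := by
    intro m hm1 hm2
    have a1 := h𝔛smul ((1 + m) / 2) (|x| - x) (by linarith) (sub_nonneg.2 (le_abs_self x))
    have a2 := h𝔛smul ((1 - m) / 2) (|x| - -x) (by linarith) (sub_nonneg.2 (neg_le_abs x))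
    have a3 := add_nonneg a1 a2
    have : ((1 + m) / 2) • (|x| - x) + ((1 - m) / 2) • (|x| - -x) = |x| - m • x := by module
    rw [this] at a3
    exact sub_nonneg.1 a3
  refine abs_le'.2 ⟨main l hl1 hl2, ?_⟩
  rw [← neg_smul]
  exact main (-l) (by linarith) (by linarith)
end
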